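/- Let d₁ ∈ ℝ and let β : ℝ → ℝ be smooth with β′(s) ≠ 0 for all s. Let u : ℝ × ℝ → ℝ be a smooth function satisfying u_t = u_xx + (β″(u)/β′(u))·u_x² + β(u)·u_x + d₁/β′(u) at every point. Then at every point (t,x): ∂_t[−β(u) − 2(β″(u)/β′(u))·u_x] = ∂_x[ −((β(u)² + 2d₁x)·β′(u)² + 2β′(u)³·u_x + 4β″(u)·(d₁ + u_x²·β″(u)) + 4β′(u)·β″(u)·(β(u)·u_x + u_xx)) / (2β′(u)²) ]. In other words, ρ₀ := −β(u) − 2(β″/β′)(u)·u_x is a conserved density with the displayed flux σ₀. -/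

import Mathlib

/-- Partial derivative with respect to the first (time) variable. -/
noncomputable def dt (u : ℝ → ℝ → ℝ) (t x : ℝ) : ℝ := deriv (fun s => u s x) t

/-- `n`-th partial derivative with respect to the second (space) variable. -/
noncomputable def dx (u : ℝ → ℝ → ℝ) (n : ℕ) (t x : ℝ) : ℝ := iteratedDeriv n (u t) x

/-!
The function `v = β(u)` solves the Burgers equation `v_t = v_xx + v v_x + d₁`, so it is conserved
with flux `v_x + v² / 2 + d₁ x`. For every `g`, the density `g(u) u_x` is conserved with flux
`g(u) u_t`, because the form `g(u) du` is closed. The density `ρ₀` is the difference of `-v` and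
the second density with `g = 2 β'' / β'`; substituting the equation for `u_t` turns the resulting
flux into `σ₀`.
-/

open Function Topology

section Slices

variable {𝕜 E F : Type*} [NontriviallyNormedField 𝕜] [NormedAddCommGroup E] [NormedSpace 𝕜 E]
  [NormedAddCommGroup F] [NormedSpace 𝕜 F]

theorem hasDerivAt_slice_fst {u : 𝕜 → 𝕜 → F} {t x : 𝕜}
    (hu : DifferentiableAt 𝕜 (uncurry u) (t, x)) :
    HasDerivAt (fun s => u s x) (fderiv 𝕜 (uncurry u) (t, x) (1, 0)) t :=
  hu.hasFDerivAt.comp_hasDerivAt (f := fun s => (s, x)) t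
    ((hasDerivAt_id t).prodMk (hasDerivAt_const t x))

theorem hasDerivAt_slice_snd {u : 𝕜 → 𝕜 → F} {t x : 𝕜}
    (hu : DifferentiableAt 𝕜 (uncurry u) (t, x)) :
    HasDerivAt (u t) (fderiv 𝕜 (uncurry u) (t, x) (0, 1)) x :=
  hu.hasFDerivAt.comp_hasDerivAt x ((hasDerivAt_const x t).prodMk (hasDerivAt_id x))

theorem hasFDerivAt_fderiv_apply {f : E → F} {p : E}
    (hf : DifferentiableAt 𝕜 (fderiv 𝕜 f) p) (w : E) :
    HasFDerivAt (fun q => fderiv 𝕜 f q w) ((fderiv 𝕜 (fderiv 𝕜 f) p).flip w) p := by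
  simpa using hf.hasFDerivAt.clm_apply (hasFDerivAt_const w p)

end Slices

section PartialDerivatives

variable {u : ℝ → ℝ → ℝ} {t x : ℝ}

theorem dx_one (u : ℝ → ℝ → ℝ) (t : ℝ) : dx u 1 t = deriv (u t) :=
  iteratedDeriv_one

theorem dx_succ (u : ℝ → ℝ → ℝ) (n : ℕ) (t : ℝ) : dx u (n + 1) t = deriv (dx u n t) :=
  iteratedDeriv_succ

theorem hasDerivAt_dt (hu : DifferentiableAt ℝ (fun s => u s x) t) :
    HasDerivAt (fun s => u s x) (dt u t x) t :=
  hu.hasDerivAt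

theorem hasDerivAt_dx_one (hu : DifferentiableAt ℝ (u t) x) :
    HasDerivAt (u t) (dx u 1 t x) x := by
  simpa only [dx_one] using hu.hasDerivAt

theorem hasDerivAt_dx {n : ℕ} (hu : ContDiffAt ℝ (n + 1) (u t) x) :
    HasDerivAt (dx u n t) (dx u (n + 1) t x) x := by
  have hdiff : DifferentiableAt ℝ (iteratedDeriv n (u t)) x := by
    have h := hu.contDiffWithinAt.differentiableWithinAt_iteratedDerivWithin (s := Set.univ)
      (m := n) (by norm_cast; exact n.lt_succ_self) (by simp)
    rwa [iteratedDerivWithin_univ, differentiableWithinAt_univ] at h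
  rw [dx_succ]
  exact hdiff.hasDerivAt

end PartialDerivatives

/-- The local conservation law `∂_t ρ = ∂_x σ` at the point `(t, x)`, for a density `ρ` and a
flux `σ`. Both derivatives are required to exist, so that laws can be added. -/
def ConservationLawAt (ρ σ : ℝ → ℝ → ℝ) (t x : ℝ) : Prop :=
  ∃ r, HasDerivAt (fun s => ρ s x) r t ∧ HasDerivAt (σ t) r x

namespace ConservationLawAt

variable {ρ σ ρ₁ σ₁ ρ₂ σ₂ : ℝ → ℝ → ℝ} {t x : ℝ}

theorem deriv_eq (h : ConservationLawAt ρ σ t x) :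
    deriv (fun s => ρ s x) t = deriv (σ t) x := by
  obtain ⟨r, hρ, hσ⟩ := h
  rw [hρ.deriv, hσ.deriv]

theorem neg (h : ConservationLawAt ρ σ t x) :
    ConservationLawAt (fun s y => -ρ s y) (fun s y => -σ s y) t x := by
  obtain ⟨r, hρ, hσ⟩ := h
  exact ⟨-r, hρ.fun_neg, hσ.fun_neg⟩

theorem sub (h₁ : ConservationLawAt ρ₁ σ₁ t x) (h₂ : ConservationLawAt ρ₂ σ₂ t x) :
    ConservationLawAt (fun s y => ρ₁ s y - ρ₂ s y) (fun s y => σ₁ s y - σ₂ s y) t x := by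
  obtain ⟨r₁, hρ₁, hσ₁⟩ := h₁
  obtain ⟨r₂, hρ₂, hσ₂⟩ := h₂
  exact ⟨r₁ - r₂, hρ₁.fun_sub hρ₂, hσ₁.fun_sub hσ₂⟩

theorem congr_flux (h : ConservationLawAt ρ σ₁ t x) (hσ : σ₂ t =ᶠ[𝓝 x] σ₁ t) :
    ConservationLawAt ρ σ₂ t x := by
  obtain ⟨r, hρ, hσ₁⟩ := h
  exact ⟨r, hρ, hσ₁.congr_of_eventuallyEq hσ⟩

end ConservationLawAt

section ConservationLaws

variable {u : ℝ → ℝ → ℝ} {t x : ℝ}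

theorem conservationLawAt_dx_one_dt (hu : ContDiffAt ℝ 2 (uncurry u) (t, x)) :
    ConservationLawAt (dx u 1) (dt u) t x := by
  have hu_near : ∀ᶠ p in 𝓝 (t, x), DifferentiableAt ℝ (uncurry u) p :=
    (hu.eventually (by simp)).mono fun p hp => hp.differentiableAt (by simp)
  have hdu : DifferentiableAt ℝ (fderiv ℝ (uncurry u)) (t, x) :=
    (hu.fderiv_right (m := 1) (by norm_num)).differentiableAt (by simp)
  have hux : uncurry (dx u 1) =ᶠ[𝓝 (t, x)] fun p => fderiv ℝ (uncurry u) p (0, 1) :=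
    hu_near.mono fun p hp => by
      simpa only [uncurry, dx_one] using (hasDerivAt_slice_snd hp).deriv
  have hut : uncurry (dt u) =ᶠ[𝓝 (t, x)] fun p => fderiv ℝ (uncurry u) p (1, 0) :=
    hu_near.mono fun p hp => (hasDerivAt_slice_fst hp).deriv
  have hux' := (hasFDerivAt_fderiv_apply hdu (0, 1)).congr_of_eventuallyEq hux
  have hut' := (hasFDerivAt_fderiv_apply hdu (1, 0)).congr_of_eventuallyEq hut
  have hsymm : IsSymmSndFDerivAt ℝ (uncurry u) (t, x) := hu.isSymmSndFDerivAt (by simp)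
  refine ⟨fderiv ℝ (fderiv ℝ (uncurry u)) (t, x) (1, 0) (0, 1), ?_, ?_⟩
  · simpa [hux'.fderiv] using hasDerivAt_slice_fst hux'.differentiableAt
  · rw [hsymm]
    simpa [hut'.fderiv] using hasDerivAt_slice_snd hut'.differentiableAt

theorem conservationLawAt_comp_mul_dx_one {g : ℝ → ℝ} (hg : DifferentiableAt ℝ g (u t x))
    (hu : ContDiffAt ℝ 2 (uncurry u) (t, x)) :
    ConservationLawAt (fun s y => g (u s y) * dx u 1 s y) (fun s y => g (u s y) * dt u s y)
      t x := by
  have hu₁ : DifferentiableAt ℝ (uncurry u) (t, x) := hu.differentiableAt (by simp)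
  obtain ⟨m, huxt, hutx⟩ := conservationLawAt_dx_one_dt hu
  have hut := hasDerivAt_dt (hasDerivAt_slice_fst hu₁).differentiableAt
  have hux := hasDerivAt_dx_one (hasDerivAt_slice_snd hu₁).differentiableAt
  have hρ := (hg.hasDerivAt.comp t hut).fun_mul huxt
  have hσ := (hg.hasDerivAt.comp x hux).fun_mul hutx
  exact ⟨_, hρ, hσ.congr_deriv (by simp only [comp_apply]; ring)⟩

theorem conservationLawAt_burgers {β : ℝ → ℝ} {d₁ : ℝ}
    (hβ' : DifferentiableAt ℝ (deriv β) (u t x)) (hβ₀ : deriv β (u t x) ≠ 0)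
    (hut : DifferentiableAt ℝ (fun s => u s x) t) (hux : ContDiffAt ℝ 2 (u t) x)
    (heq : dt u t x = dx u 2 t x
      + (deriv (deriv β) (u t x) / deriv β (u t x)) * (dx u 1 t x) ^ 2
      + β (u t x) * dx u 1 t x + d₁ / deriv β (u t x)) :
    ConservationLawAt (fun s y => β (u s y))
      (fun s y => deriv β (u s y) * dx u 1 s y + β (u s y) ^ 2 / 2 + d₁ * y) t x := by
  have hβ : HasDerivAt β (deriv β (u t x)) (u t x) :=
    (differentiableAt_of_deriv_ne_zero hβ₀).hasDerivAt
  have hu_x := hasDerivAt_dx_one (hux.differentiableAt (by simp))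
  have hv_t := hβ.comp t (hasDerivAt_dt hut)
  have hu_xx : HasDerivAt (dx u 1 t) (dx u 2 t x) x := hasDerivAt_dx (hux.of_le (by norm_num))
  have hv_xx := (hβ'.hasDerivAt.comp x hu_x).fun_mul hu_xx
  have hv_sq := ((hβ.comp x hu_x).fun_pow 2).div_const 2
  have hflux := (hv_xx.fun_add hv_sq).fun_add ((hasDerivAt_id x).const_mul d₁)
  refine ⟨_, hv_t, hflux.congr_deriv ?_⟩
  rw [heq]
  simp only [comp_apply]
  field_simp
  ring

end ConservationLaws

theorem stmt_18_general {d₁ : ℝ} {β : ℝ → ℝ} {u : ℝ → ℝ → ℝ} {t x : ℝ}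
    (hβ : ContDiffAt ℝ 3 β (u t x)) (hβ₀ : deriv β (u t x) ≠ 0)
    (hu : ContDiffAt ℝ 2 (uncurry u) (t, x))
    (heq : ∀ᶠ y in 𝓝 x, dt u t y = dx u 2 t y
      + (deriv (deriv β) (u t y) / deriv β (u t y)) * (dx u 1 t y) ^ 2
      + β (u t y) * dx u 1 t y + d₁ / deriv β (u t y)) :
    ConservationLawAt
      (fun s y => -β (u s y) - 2 * (deriv (deriv β) (u s y) / deriv β (u s y)) * dx u 1 s y)
      (fun s y =>
        -(((β (u s y) ^ 2 + 2 * d₁ * y) * (deriv β (u s y)) ^ 2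
            + 2 * (deriv β (u s y)) ^ 3 * dx u 1 s y
            + 4 * deriv (deriv β) (u s y) * (d₁ + (dx u 1 s y) ^ 2 * deriv (deriv β) (u s y))
            + 4 * deriv β (u s y) * deriv (deriv β) (u s y)
                * (β (u s y) * dx u 1 s y + dx u 2 s y))
          / (2 * (deriv β (u s y)) ^ 2))) t x := by
  have hβ₁ : ContDiffAt ℝ 2 (deriv β) (u t x) := hβ.derivWithin (by norm_num)
  have hβ₂ : ContDiffAt ℝ 1 (deriv (deriv β)) (u t x) := hβ₁.derivWithin (by norm_num)
  have hβ₁' := hβ₁.differentiableAt (by simp)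
  have hut := (hasDerivAt_slice_fst (hu.differentiableAt (by simp))).differentiableAt
  have hux : ContDiffAt ℝ 2 (u t) x := hu.comp x (contDiffAt_const.prodMk contDiffAt_id)
  have burgers := conservationLawAt_burgers hβ₁' hβ₀ hut hux heq.self_of_nhds
  have closed_form := conservationLawAt_comp_mul_dx_one
    (((hβ₂.differentiableAt (by simp)).fun_div hβ₁' hβ₀).const_mul 2) hu
  refine (burgers.neg.sub closed_form).congr_flux ?_
  have hβ₀_near : ∀ᶠ y in 𝓝 x, deriv β (u t y) ≠ 0 :=
    (hβ₁.continuousAt.comp hux.continuousAt).eventually_ne hβ₀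
  filter_upwards [heq, hβ₀_near] with y hy hy₀
  rw [hy]
  field_simp
  ring

theorem stmt_18 (d₁ : ℝ) (β : ℝ → ℝ) (hβ : ContDiff ℝ (⊤ : ℕ∞) β)
    (hβ' : ∀ s, deriv β s ≠ 0)
    (u : ℝ → ℝ → ℝ) (hu : ContDiff ℝ (⊤ : ℕ∞) fun p : ℝ × ℝ => u p.1 p.2)
    (heq : ∀ t x, dt u t x = dx u 2 t x
      + (deriv (deriv β) (u t x) / deriv β (u t x)) * (dx u 1 t x) ^ 2
      + β (u t x) * dx u 1 t x + d₁ / deriv β (u t x)) :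
    ∀ t x, deriv (fun s =>
        -β (u s x) - 2 * (deriv (deriv β) (u s x) / deriv β (u s x)) * dx u 1 s x) t =
      deriv (fun y =>
        -(((β (u t y) ^ 2 + 2 * d₁ * y) * (deriv β (u t y)) ^ 2
            + 2 * (deriv β (u t y)) ^ 3 * dx u 1 t y
            + 4 * deriv (deriv β) (u t y) * (d₁ + (dx u 1 t y) ^ 2 * deriv (deriv β) (u t y))
            + 4 * deriv β (u t y) * deriv (deriv β) (u t y)
                * (β (u t y) * dx u 1 t y + dx u 2 t y))
          / (2 * (deriv β (u t y)) ^ 2))) x := by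
  intro t x
  have law := stmt_18_general (hβ.contDiffAt.of_le (by norm_cast)) (hβ' (u t x))
    (hu.contDiffAt.of_le (by norm_cast)) (.of_forall (heq t))
  exact law.deriv_eq
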